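/- arXiv:math/0603006 — 2 statements merged into one kernel-verified Lean document; each statement's English description precedes it below -/
import Mathlib

section
/- Let U ⊆ ℍ be a bounded open connected set containing 0, and let f : U → U be a surjection onto U which is real-analytic on U (as a map of ℝ⁴), pseudoconformal at every point of U, and satisfies f(0) = 0 and f'(0) = id (the identity map of ℍ as the Fréchet derivative at 0). Then f(z) = z for every z ∈ U. (Paper's Theorem 3.30, Cartan-type uniqueness theorem, for one quaternion variable.) -/
open scoped Quaternion

/-- `f` is pseudoconformal at `ξ`: it is Fréchet differentiable over `ℝ` at `ξ` and
its derivative has the form `h ↦ a * h * b` with nonzero quaternions `a`, `b`. -/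
def Pseudoconformal (f : ℍ[ℝ] → ℍ[ℝ]) (ξ : ℍ[ℝ]) : Prop :=
  ∃ (A : ℍ[ℝ] →L[ℝ] ℍ[ℝ]) (a b : ℍ[ℝ]), a ≠ 0 ∧ b ≠ 0 ∧
    HasFDerivAt f A ξ ∧ ∀ h : ℍ[ℝ], A h = a * h * b

/-!
Since `h ↦ a h b` is a similarity of `ℝ⁴`, the map `f` is conformal, and so its second derivative
is determined by one coefficient, `f''(l, h) = -f'(l c h + h c l)` with `c = -f'' / (2 f')`.
Symmetry of the third derivative then forces `c' k = -c k c`, the vanishing of the Schwarzian, so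
that `c x = (1 + c₀ x)⁻¹ c₀`; two integrations make `f` a Möbius map (Liouville's theorem). With
`f 0 = 0` and `f' 0 = id` this is `f x = x (1 + c₀ x)⁻¹`, whose `n`-th iterate is
`x (1 + n c₀ x)⁻¹`. If `c₀ ≠ 0`, its pole `-(n c₀)⁻¹` enters `U` for large `n`, although all
iterates map `U` to itself.
-/

open Filter Set Topology ContinuousLinearMap
open scoped RealInnerProductSpace

section Calculus

variable {E F : Type*} [NormedAddCommGroup E] [NormedAddCommGroup F]

theorem eq_of_hasFDerivAt_zero [NormedSpace ℝ E] [NormedSpace ℝ F] {U : Set E} (hU : IsOpen U)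
    (hUc : IsPreconnected U) {g : E → F} (hg : ∀ x ∈ U, HasFDerivAt g (0 : E →L[ℝ] F) x)
    {x y : E} (hx : x ∈ U) (hy : y ∈ U) : g x = g y :=
  hU.is_const_of_fderiv_eq_zero (𝕜 := ℝ) hUc
    (fun z hz => (hg z hz).differentiableAt.differentiableWithinAt)
    (fun z hz => (hg z hz).fderiv) hx hy

theorem hasFDerivAt_fderiv [NormedSpace ℝ E] [NormedSpace ℝ F] {f : E → F} {x : E}
    (hf : ContDiffAt ℝ 2 f x) : HasFDerivAt (fderiv ℝ f) (fderiv ℝ (fderiv ℝ f) x) x :=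
  ((hf.fderiv_right (m := 1) le_rfl).differentiableAt one_ne_zero).hasFDerivAt

variable [InnerProductSpace ℝ E] [InnerProductSpace ℝ F]

/- The Koszul trick: differentiating the conformality relation determines the part of
`⟪f'' l h, f' k⟫` symmetric in `h, k`, and `f''` itself is symmetric in `l, h`. -/
theorem two_mul_inner_fderiv_fderiv_of_conformal {f : E → F} {ρ : E → ℝ} {ρ' : E →L[ℝ] ℝ} {x : E}
    (hf : ContDiffAt ℝ 2 f x) (hρ : HasFDerivAt ρ ρ' x)
    (hconf : ∀ᶠ y in 𝓝 x, ∀ h k, ⟪fderiv ℝ f y h, fderiv ℝ f y k⟫ = ρ y * ⟪h, k⟫) (l h k : E) :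
    2 * ⟪fderiv ℝ (fderiv ℝ f) x l h, fderiv ℝ f x k⟫ =
      ρ' l * ⟪h, k⟫ + ρ' h * ⟪l, k⟫ - ρ' k * ⟪l, h⟫ := by
  have hf' := hasFDerivAt_fderiv hf
  have hsymm : ∀ u v, fderiv ℝ (fderiv ℝ f) x u v = fderiv ℝ (fderiv ℝ f) x v u :=
    (hf.isSymmSndFDerivAt (by simp)).eq
  have hdiff : ∀ u v w, ⟪fderiv ℝ f x v, fderiv ℝ (fderiv ℝ f) x u w⟫ +
      ⟪fderiv ℝ (fderiv ℝ f) x u v, fderiv ℝ f x w⟫ = ⟪v, w⟫ * ρ' u := by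
    intro u v w
    have hleft := (hf'.clm_apply (hasFDerivAt_const v x)).inner ℝ
      (hf'.clm_apply (hasFDerivAt_const w x))
    have hright := (hρ.mul_const ⟪v, w⟫).congr_of_eventuallyEq (hconf.mono fun y hy => hy v w)
    simpa [fderivInnerCLM_apply] using congr($(hleft.unique hright) u)
  have hlhk := hdiff l h k
  have hhlk := hdiff h l k
  have hklh := hdiff k l h
  rw [hsymm l k, real_inner_comm] at hlhk
  rw [hsymm h l, real_inner_comm] at hhlk
  rw [hsymm k h, real_inner_comm] at hklh
  linarith

end Calculus

section Iteration

variable {R : Type*} {U : Set R} {f : R → R} {c : R}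

theorem iterate_mul_one_add_nsmul [Ring R] (hmaps : MapsTo f U U)
    (hf : ∀ x ∈ U, f x * (1 + c * x) = x) (n : ℕ) {x : R} (hx : x ∈ U) :
    f^[n] x * (1 + n • (c * x)) = x := by
  induction n generalizing x with
  | zero => simp
  | succ n ih =>
    calc f^[n + 1] x * (1 + (n + 1) • (c * x))
        = f^[n] (f x) * (1 + c * x + n • (c * (f x * (1 + c * x)))) := by
          rw [hf x hx, Function.iterate_succ_apply, succ_nsmul]; abel_nf
      _ = f^[n] (f x) * (1 + n • (c * f x)) * (1 + c * x) := by
          rw [mul_assoc, add_mul 1, one_mul, smul_mul_assoc, mul_assoc c]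
      _ = x := by rw [ih (hmaps hx), hf x hx]

theorem eq_zero_of_mapsTo_of_apply_mul_one_add_eq [NormedDivisionRing R] [NormedAlgebra ℝ R]
    (hU : U ∈ 𝓝 0) (hmaps : MapsTo f U U) (hf : ∀ x ∈ U, f x * (1 + c * x) = x) : c = 0 := by
  by_contra hc
  have hlim : Tendsto (fun n : ℕ => (n : ℝ)⁻¹ • (-c⁻¹)) atTop (𝓝 0) := by
    simpa using (tendsto_inv_atTop_nhds_zero_nat (𝕜 := ℝ)).smul_const (-c⁻¹)
  obtain ⟨n, hpole, hn⟩ := ((hlim.eventually hU).and (eventually_ne_atTop 0)).exists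
  have hn' : (n : ℝ) ≠ 0 := Nat.cast_ne_zero.mpr hn
  have hvanish : 1 + n • (c * ((n : ℝ)⁻¹ • (-c⁻¹))) = 0 := by
    rw [← Nat.cast_smul_eq_nsmul ℝ, mul_smul_comm, smul_inv_smul₀ hn', mul_neg,
      mul_inv_cancel₀ hc, add_neg_cancel]
  have hpole_eq := iterate_mul_one_add_nsmul hmaps hf n hpole
  rw [hvanish, mul_zero] at hpole_eq
  exact smul_ne_zero (inv_ne_zero hn') (neg_ne_zero.mpr (inv_ne_zero hc)) hpole_eq.symm

end Iteration

section Moebius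

variable {R : Type*}

theorem one_add_mul_ne_zero_swap [Ring R] [IsDomain R] {a b : R} (h : 1 + a * b ≠ 0) :
    1 + b * a ≠ 0 := by
  intro h₀
  have hb : (1 + b * a) * b = b * (1 + a * b) := by noncomm_ring
  rw [h₀, zero_mul, eq_comm, mul_eq_zero, or_iff_left h] at hb
  simp [hb] at h₀

theorem one_add_mul_ne_zero_of_mul_one_add_mul [Ring R] [Nontrivial R] {a b t : R}
    (h : b * (1 + t * a) = a) : 1 + t * a ≠ 0 := by
  intro h₀
  rw [h₀, mul_zero] at h
  rw [← h, mul_zero, add_zero] at h₀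
  exact one_ne_zero h₀

theorem one_add_mul_mul_of_mul_one_add_mul [Ring R] [IsDomain R] {a b t : R}
    (h : b * (1 + t * a) = a) : (1 + a * t) * b = a :=
  mul_right_cancel₀ (one_add_mul_ne_zero_of_mul_one_add_mul h) <| calc
    (1 + a * t) * b * (1 + t * a) = (1 + a * t) * a := by rw [mul_assoc, h]
    _ = a * (1 + t * a) := by noncomm_ring

theorem hasFDerivAt_mul_inv_one_add_mul [NormedDivisionRing R] [NormedAlgebra ℝ R] {c x : R}
    (h : 1 + c * x ≠ 0) :
    HasFDerivAt (fun y : R => y * (1 + c * y)⁻¹)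
      (mulLeftRight ℝ R (1 + x * c)⁻¹ (1 + c * x)⁻¹) x := by
  have hden : HasFDerivAt (fun y : R => 1 + c * y) _ x :=
    ((hasFDerivAt_id (𝕜 := ℝ) x).const_mul c).const_add 1
  have hinv : HasFDerivAt (fun y : R => (1 + c * y)⁻¹) _ x :=
    (hasFDerivAt_inv' (𝕜 := ℝ) h).comp x hden
  have hcomm : (1 + x * c)⁻¹ = 1 - x * (1 + c * x)⁻¹ * c := by
    refine inv_eq_of_mul_eq_one_right ?_
    calc (1 + x * c) * (1 - x * (1 + c * x)⁻¹ * c)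
        = 1 + x * c - x * ((1 + c * x) * (1 + c * x)⁻¹) * c := by noncomm_ring
      _ = 1 := by rw [mul_inv_cancel₀ h, mul_one, add_sub_cancel_right]
  refine ((hasFDerivAt_id x).mul' hinv).congr_fderiv (ContinuousLinearMap.ext fun k => ?_)
  have hk : x * -((1 + c * x)⁻¹ * (c * k) * (1 + c * x)⁻¹) + k * (1 + c * x)⁻¹ =
      (1 + x * c)⁻¹ * k * (1 + c * x)⁻¹ := by
    rw [hcomm]
    noncomm_ring
  simpa [mul_assoc] using hk

end Moebius

section Quaternion

theorem inner_mul_mul_mul (a b h k : ℍ[ℝ]) :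
    ⟪a * h * b, a * k * b⟫ = ‖a * b‖ ^ 2 * ⟪h, k⟫ := by
  simp only [real_inner_eq_norm_mul_self_add_norm_mul_self_sub_norm_sub_mul_self_div_two,
    ← sub_mul, ← mul_sub, norm_mul]
  ring

theorem inner_mul_self_eq_re_mul_norm_sq (q w : ℍ[ℝ]) : ⟪w, q * w⟫ = q.re * ‖w‖ ^ 2 := by
  rw [Quaternion.inner_def, star_mul, ← mul_assoc, Quaternion.self_mul_star,
    Quaternion.normSq_eq_norm_mul_self, Quaternion.coe_mul_eq_smul, Quaternion.re_smul,
    Quaternion.re_star, smul_eq_mul]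
  ring

theorem inner_star_left_eq_re_mul (c v : ℍ[ℝ]) : ⟪star c, v⟫ = (c * v).re := by
  simp [Quaternion.inner_def]

theorem inner_mul_mul_add_mul_mul (c l h k : ℍ[ℝ]) :
    ⟪l * c * h + h * c * l, k⟫ =
      2 * ((c * l).re * ⟪h, k⟫ + (c * h).re * ⟪l, k⟫ - (c * k).re * ⟪l, h⟫) := by
  simp only [Quaternion.inner_def, Quaternion.re_mul, Quaternion.imI_mul, Quaternion.imJ_mul,
    Quaternion.imK_mul, Quaternion.re_add, Quaternion.imI_add, Quaternion.imJ_add,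
    Quaternion.imK_add, Quaternion.re_star, Quaternion.imI_star, Quaternion.imJ_star,
    Quaternion.imK_star]
  ring

theorem eq_zero_of_mul_mul_add_mul_mul_comm {E : ℍ[ℝ] → ℍ[ℝ]}
    (hE : ∀ l h k, h * E l * k + k * E l * h = l * E h * k + k * E h * l) (h : ℍ[ℝ]) :
    E h = 0 := by
  have hE_one : ∀ h, (2 : ℝ) • E h = h * E 1 + E 1 * h := fun h => by
    simpa [two_smul] using (hE 1 h 1).symm
  have hm : ∀ l h k, h * (l * E 1 + E 1 * l) * k + k * (l * E 1 + E 1 * l) * h =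
      l * (h * E 1 + E 1 * h) * k + k * (h * E 1 + E 1 * h) * l := fun l h k => by
    simpa only [← hE_one, mul_smul_comm, smul_mul_assoc, ← smul_add] using
      congr((2 : ℝ) • $(hE l h k))
  have hE_one_eq : E 1 = 0 := by
    obtain ⟨i, hi⟩ : ∃ i : ℍ[ℝ], i.re = 0 ∧ i.imI = 1 ∧ i.imJ = 0 ∧ i.imK = 0 :=
      ⟨⟨0, 1, 0, 0⟩, rfl, rfl, rfl, rfl⟩
    obtain ⟨j, hj⟩ : ∃ j : ℍ[ℝ], j.re = 0 ∧ j.imI = 0 ∧ j.imJ = 1 ∧ j.imK = 0 :=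
      ⟨⟨0, 0, 1, 0⟩, rfl, rfl, rfl, rfl⟩
    have hmi := hm 1 i i
    have hmj := hm 1 j j
    have hmij := hm j i i
    simp only [Quaternion.ext_iff, Quaternion.re_add, Quaternion.imI_add, Quaternion.imJ_add,
      Quaternion.imK_add, Quaternion.re_mul, Quaternion.imI_mul, Quaternion.imJ_mul,
      Quaternion.imK_mul, Quaternion.re_one, Quaternion.imI_one, Quaternion.imJ_one,
      Quaternion.imK_one, hi, hj] at hmi hmj hmij
    ext <;> simp only [Quaternion.re_zero, Quaternion.imI_zero, Quaternion.imJ_zero,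
      Quaternion.imK_zero] <;> linarith
  simpa [hE_one_eq] using hE_one h

theorem hasFDerivAt_norm_sq_of_neg_mulLeftRight {W : ℍ[ℝ] → ℍ[ℝ]} {c x : ℍ[ℝ]}
    (hW : HasFDerivAt W (-mulLeftRight ℝ ℍ[ℝ] c (W x)) x) :
    HasFDerivAt (fun y => ‖W y‖ ^ 2) ((-2 * ‖W x‖ ^ 2) • innerSL ℝ (star c)) x := by
  refine hW.norm_sq.congr_fderiv (ContinuousLinearMap.ext fun k => ?_)
  have hinner : ⟪W x, -(c * k * W x)⟫ = -((c * k).re * ‖W x‖ ^ 2) := by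
    rw [inner_neg_right, inner_mul_self_eq_re_mul_norm_sq]
  simp only [smul_apply, comp_apply, neg_apply, mulLeftRight_apply, innerSL_apply_apply, hinner,
    inner_star_left_eq_re_mul, nsmul_eq_mul, Nat.cast_ofNat, smul_eq_mul]
  ring

end Quaternion

namespace Pseudoconformal

variable {f : ℍ[ℝ] → ℍ[ℝ]} {x : ℍ[ℝ]}

theorem differentiableAt (hf : Pseudoconformal f x) : DifferentiableAt ℝ f x :=
  let ⟨_, _, _, _, _, hA, _⟩ := hf
  hA.differentiableAt

theorem exists_fderiv_eq (hf : Pseudoconformal f x) :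
    ∃ a b : ℍ[ℝ], a ≠ 0 ∧ b ≠ 0 ∧ fderiv ℝ f x = mulLeftRight ℝ ℍ[ℝ] a b := by
  obtain ⟨A, a, b, ha, hb, hA, hAab⟩ := hf
  exact ⟨a, b, ha, hb, hA.fderiv.trans (ContinuousLinearMap.ext fun h => by simp [hAab])⟩

theorem isInvertible_fderiv (hf : Pseudoconformal f x) : (fderiv ℝ f x).IsInvertible := by
  obtain ⟨a, b, ha, hb, hab⟩ := hf.exists_fderiv_eq
  rw [hab]
  exact .of_inverse (g := mulLeftRight ℝ ℍ[ℝ] a⁻¹ b⁻¹)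
    (ContinuousLinearMap.ext fun h => by simp [mul_assoc, ha, hb])
    (ContinuousLinearMap.ext fun h => by simp [mul_assoc, ha, hb])

theorem fderiv_one_ne_zero (hf : Pseudoconformal f x) : fderiv ℝ f x 1 ≠ 0 := fun h =>
  one_ne_zero (hf.isInvertible_fderiv.injective (h.trans (map_zero _).symm))

theorem inner_fderiv_fderiv (hf : Pseudoconformal f x) (h k : ℍ[ℝ]) :
    ⟪fderiv ℝ f x h, fderiv ℝ f x k⟫ = ‖fderiv ℝ f x 1‖ ^ 2 * ⟪h, k⟫ := by
  obtain ⟨a, b, -, -, hab⟩ := hf.exists_fderiv_eq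
  simp [hab, inner_mul_mul_mul]

end Pseudoconformal

/-- The coefficient `c` of the Möbius map `y ↦ f x + f'(x) ((y - x) (1 + c (y - x))⁻¹)` osculating
`f` to second order at `x`; it is the quaternionic analogue of `-f'' / (2 f')`, half the negative of
the pre-Schwarzian derivative. The value is junk where `f'(x)` is not invertible. -/
noncomputable def osculatingCoeff (f : ℍ[ℝ] → ℍ[ℝ]) (x : ℍ[ℝ]) : ℍ[ℝ] :=
  -(2 : ℝ)⁻¹ • (fderiv ℝ f x).inverse (fderiv ℝ (fderiv ℝ f) x 1 1)

section Local

variable {f : ℍ[ℝ] → ℍ[ℝ]} {x : ℍ[ℝ]}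

theorem differentiableAt_osculatingCoeff (hf : ContDiffAt ℝ 3 f x) (hx : Pseudoconformal f x) :
    DifferentiableAt ℝ (osculatingCoeff f) x := by
  have hf' : ContDiffAt ℝ 2 (fderiv ℝ f) x := hf.fderiv_right le_rfl
  have hinv : DifferentiableAt ℝ (fun y => (fderiv ℝ f y).inverse) x :=
    ((hx.isInvertible_fderiv.contDiffAt_map_inverse (n := 2)).comp x hf').differentiableAt
      two_ne_zero
  have hsnd := (hasFDerivAt_fderiv hf').differentiableAt
  exact (hinv.clm_apply ((hsnd.clm_apply (differentiableAt_const 1)).clm_apply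
    (differentiableAt_const 1))).const_smul (-(2 : ℝ)⁻¹)

theorem fderiv_osculatingCoeff_apply (hx : Pseudoconformal f x) :
    fderiv ℝ f x (osculatingCoeff f x) = -(2 : ℝ)⁻¹ • fderiv ℝ (fderiv ℝ f) x 1 1 := by
  rw [osculatingCoeff, map_smul, hx.isInvertible_fderiv.self_apply_inverse]

theorem hasFDerivAt_norm_sq_fderiv_one (hf : ContDiffAt ℝ 2 f x)
    (hpc : ∀ᶠ y in 𝓝 x, Pseudoconformal f y) :
    HasFDerivAt (fun y => ‖fderiv ℝ f y 1‖ ^ 2)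
      ((-4 * ‖fderiv ℝ f x 1‖ ^ 2) • innerSL ℝ (star (osculatingCoeff f x))) x := by
  have hx := hpc.self_of_nhds
  obtain ⟨ρ', hρ⟩ : DifferentiableAt ℝ (fun y => ‖fderiv ℝ f y 1‖ ^ 2) x :=
    ((hasFDerivAt_fderiv hf).clm_apply (hasFDerivAt_const 1 x)).norm_sq.differentiableAt
  set c := osculatingCoeff f x
  have hkoszul : ∀ k, ρ' k = 2 * ρ' 1 * k.re + 4 * ‖fderiv ℝ f x 1‖ ^ 2 * ⟪c, k⟫ := by
    intro k
    have hconf := two_mul_inner_fderiv_fderiv_of_conformal hf hρ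
      (hpc.mono fun y hy => hy.inner_fderiv_fderiv) 1 1 k
    have hsnd : fderiv ℝ (fderiv ℝ f) x 1 1 = fderiv ℝ f x (-(2 : ℝ) • c) := by
      rw [map_smul, fderiv_osculatingCoeff_apply hx, smul_smul]
      norm_num
    have hre : ⟪(1 : ℍ[ℝ]), k⟫ = k.re := by simp [Quaternion.inner_def]
    rw [hsnd, hx.inner_fderiv_fderiv, real_inner_smul_left, real_inner_self_eq_norm_sq, norm_one,
      hre] at hconf
    linarith
  have hone : ρ' 1 = -4 * ‖fderiv ℝ f x 1‖ ^ 2 * c.re := by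
    have hre : ⟪c, 1⟫ = c.re := by simp [Quaternion.inner_def]
    have hkoszul_one := hkoszul 1
    rw [hre, Quaternion.re_one] at hkoszul_one
    linarith
  refine hρ.congr_fderiv (ContinuousLinearMap.ext fun k => ?_)
  have hstar : ⟪star c, k⟫ = 2 * c.re * k.re - ⟪c, k⟫ := by
    simp only [Quaternion.inner_def, Quaternion.re_mul, Quaternion.re_star, Quaternion.imI_star,
      Quaternion.imJ_star, Quaternion.imK_star]
    ring
  rw [hkoszul k, hone, smul_apply, innerSL_apply_apply, hstar, smul_eq_mul]
  ring

theorem fderiv_fderiv_apply_of_pseudoconformal (hf : ContDiffAt ℝ 2 f x)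
    (hpc : ∀ᶠ y in 𝓝 x, Pseudoconformal f y) (l h : ℍ[ℝ]) :
    fderiv ℝ (fderiv ℝ f) x l h =
      -fderiv ℝ f x (l * osculatingCoeff f x * h + h * osculatingCoeff f x * l) := by
  have hx := hpc.self_of_nhds
  have hkoszul := two_mul_inner_fderiv_fderiv_of_conformal hf
    (hasFDerivAt_norm_sq_fderiv_one hf hpc) (hpc.mono fun y hy => hy.inner_fderiv_fderiv) l h
  refine ext_inner_right ℝ fun v => ?_
  obtain ⟨k, rfl⟩ := hx.isInvertible_fderiv.surjective v
  rw [inner_neg_left, hx.inner_fderiv_fderiv, inner_mul_mul_add_mul_mul]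
  simp only [smul_apply, smul_eq_mul, innerSL_apply_apply, inner_star_left_eq_re_mul] at hkoszul
  linear_combination hkoszul k / 2

theorem fderiv_fderiv_fderiv_apply_of_pseudoconformal (hf : ContDiffAt ℝ 3 f x)
    (hpc : ∀ᶠ y in 𝓝 x, Pseudoconformal f y) {c : ℍ[ℝ]} {c' : ℍ[ℝ] →L[ℝ] ℍ[ℝ]}
    (hc : osculatingCoeff f x = c) (hc' : HasFDerivAt (osculatingCoeff f) c' x) (l h k : ℍ[ℝ]) :
    fderiv ℝ (fderiv ℝ (fderiv ℝ f)) x l h k =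
      fderiv ℝ f x (l * c * (h * c * k + k * c * h) + (h * c * k + k * c * h) * c * l
        - (h * c' l * k + k * c' l * h)) := by
  have hf₂ : ContDiffAt ℝ 2 f x := hf.of_le (by norm_num)
  have hsnd : (fun y => fderiv ℝ (fderiv ℝ f) y h k) =ᶠ[𝓝 x] fun y =>
      -fderiv ℝ f y (h * osculatingCoeff f y * k + k * osculatingCoeff f y * h) := by
    filter_upwards [hf₂.eventually (by simp), hpc.eventually_nhds] with y hfy hpcy
    exact fderiv_fderiv_apply_of_pseudoconformal hfy hpcy h k
  have hleft := ((hasFDerivAt_fderiv (hf.fderiv_right (m := 2) le_rfl)).clm_apply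
    (hasFDerivAt_const h x)).clm_apply (hasFDerivAt_const k x)
  have hright := ((hasFDerivAt_fderiv hf₂).clm_apply (((hc'.const_mul h).mul_const' k).add
    ((hc'.const_mul k).mul_const' h))).neg.congr_of_eventuallyEq hsnd
  have heq : fderiv ℝ (fderiv ℝ (fderiv ℝ f)) x l h k =
      -(fderiv ℝ f x (h * c' l * k + k * c' l * h) +
        fderiv ℝ (fderiv ℝ f) x l (h * c * k + k * c * h)) := by
    simpa [hc, add_comm] using congr($(hleft.unique hright) l)
  rw [heq, fderiv_fderiv_apply_of_pseudoconformal hf₂ hpc, hc, map_sub]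
  abel

theorem hasFDerivAt_osculatingCoeff (hf : ContDiffAt ℝ 3 f x)
    (hpc : ∀ᶠ y in 𝓝 x, Pseudoconformal f y) :
    HasFDerivAt (osculatingCoeff f)
      (-mulLeftRight ℝ ℍ[ℝ] (osculatingCoeff f x) (osculatingCoeff f x)) x := by
  have hx := hpc.self_of_nhds
  have hc' := (differentiableAt_osculatingCoeff hf hx).hasFDerivAt
  set c' := fderiv ℝ (osculatingCoeff f) x
  obtain ⟨c, hc⟩ : ∃ c, osculatingCoeff f x = c := ⟨_, rfl⟩
  have hsymm : ∀ l h k, h * (c' l + c * l * c) * k + k * (c' l + c * l * c) * h =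
      l * (c' h + c * h * c) * k + k * (c' h + c * h * c) * l := by
    intro l h k
    have hf' : IsSymmSndFDerivAt ℝ (fderiv ℝ f) x :=
      (hf.fderiv_right (m := 2) le_rfl).isSymmSndFDerivAt (by simp)
    have hthird := congr($(hf'.eq l h) k)
    simp only [fderiv_fderiv_fderiv_apply_of_pseudoconformal hf hpc hc hc'] at hthird
    have harg := sub_eq_zero.mpr (hx.isInvertible_fderiv.injective hthird)
    rw [← sub_eq_zero, ← neg_eq_zero, ← harg]
    noncomm_ring
  rw [hc]
  exact hc'.congr_fderiv <| ContinuousLinearMap.ext fun l => by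
    simpa using eq_neg_of_add_eq_zero_left
      (eq_zero_of_mul_mul_add_mul_mul_comm (E := fun l => c' l + c * l * c) hsymm l)

theorem hasFDerivAt_osculatingCoeff_mul_one_add_sub (hf : ContDiffAt ℝ 3 f x)
    (hpc : ∀ᶠ y in 𝓝 x, Pseudoconformal f y) (p a : ℍ[ℝ]) :
    HasFDerivAt (fun y => osculatingCoeff f y * (1 + (y - p) * a) - a)
      (-mulLeftRight ℝ ℍ[ℝ] (osculatingCoeff f x)
        (osculatingCoeff f x * (1 + (x - p) * a) - a)) x := by
  have hfactor := (((hasFDerivAt_id (𝕜 := ℝ) x).sub_const p).mul_const' a).const_add 1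
  refine (((hasFDerivAt_osculatingCoeff hf hpc).mul' hfactor).sub_const a).congr_fderiv
    (ContinuousLinearMap.ext fun k => ?_)
  set c := osculatingCoeff f x
  have hk : c * (k * a) + -(c * k * c) * (1 + (x - p) * a) =
      c * k * a - c * k * (c * (1 + (x - p) * a)) := by
    noncomm_ring
  simpa using hk

end Local

section Global

variable {f : ℍ[ℝ] → ℍ[ℝ]} {U : Set ℍ[ℝ]} {p x : ℍ[ℝ]}

theorem osculatingCoeff_mul_one_add (hU : IsOpen U) (hUc : IsPreconnected U)
    (hf : ContDiffOn ℝ 3 f U) (hpc : ∀ x ∈ U, Pseudoconformal f x) (hp : p ∈ U) (hx : x ∈ U) :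
    osculatingCoeff f x * (1 + (x - p) * osculatingCoeff f p) = osculatingCoeff f p := by
  set W : ℍ[ℝ] → ℍ[ℝ] := fun y =>
    osculatingCoeff f y * (1 + (y - p) * osculatingCoeff f p) - osculatingCoeff f p with hW
  set ρ : ℍ[ℝ] → ℝ := fun y => ‖fderiv ℝ f y 1‖ ^ 2
  have hρ₀ : ∀ y ∈ U, ρ y ≠ 0 := fun y hy =>
    pow_ne_zero 2 (norm_ne_zero_iff.mpr (hpc y hy).fderiv_one_ne_zero)
  -- `‖W‖²` and `ρ` have logarithmic derivatives `k ↦ -2 re (c k)` and `k ↦ -4 re (c k)`.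
  have hderiv : ∀ y ∈ U, HasFDerivAt (fun y => (‖W y‖ ^ 2) ^ 2 * (ρ y)⁻¹) (0 : ℍ[ℝ] →L[ℝ] ℝ) y := by
    intro y hy
    have hfy := hf.contDiffAt (hU.mem_nhds hy)
    have hpcy := eventually_of_mem (hU.mem_nhds hy) hpc
    have hN := (hasFDerivAt_norm_sq_of_neg_mulLeftRight
      (hasFDerivAt_osculatingCoeff_mul_one_add_sub hfy hpcy p (osculatingCoeff f p))).pow 2
    have hρy := hasFDerivAt_norm_sq_fderiv_one (hfy.of_le (by norm_num)) hpcy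
    have hinv := (hasDerivAt_inv (hρ₀ y hy)).comp_hasFDerivAt y hρy
    refine (hN.mul hinv).congr_fderiv (ContinuousLinearMap.ext fun k => ?_)
    have hρy₀ := hρ₀ y hy
    simp only [add_apply, smul_apply, smul_eq_mul, nsmul_eq_mul, Function.comp_apply, zero_apply]
    field_simp
    ring
  have hconst := eq_of_hasFDerivAt_zero hU hUc hderiv hx hp
  have hWp : W p = 0 := by simp [hW]
  rw [hWp] at hconst
  simpa [hρ₀ x hx, hW, sub_eq_zero] using hconst

theorem fderiv_one_add_mul_osculatingCoeff (hU : IsOpen U) (hUc : IsPreconnected U)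
    (hf : ContDiffOn ℝ 3 f U) (hpc : ∀ x ∈ U, Pseudoconformal f x) (hp : p ∈ U) (hx : x ∈ U)
    (h : ℍ[ℝ]) :
    fderiv ℝ f x ((1 + (x - p) * osculatingCoeff f p) * h * (1 + osculatingCoeff f p * (x - p))) =
      fderiv ℝ f p h := by
  set c := osculatingCoeff f p
  have hderiv : ∀ y ∈ U, HasFDerivAt
      (fun y => fderiv ℝ f y ((1 + (y - p) * c) * h * (1 + c * (y - p))))
      (0 : ℍ[ℝ] →L[ℝ] ℍ[ℝ]) y := by
    intro y hy
    have hfy : ContDiffAt ℝ 2 f y := (hf.contDiffAt (hU.mem_nhds hy)).of_le (by norm_num)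
    have hc := osculatingCoeff_mul_one_add hU hUc hf hpc hp hy
    have hleft : osculatingCoeff f y * ((1 + (y - p) * c) * h * (1 + c * (y - p))) =
        c * h * (1 + c * (y - p)) := by
      rw [← mul_assoc, ← mul_assoc, hc]
    have hright : (1 + (y - p) * c) * h * (1 + c * (y - p)) * osculatingCoeff f y =
        (1 + (y - p) * c) * h * c := by
      rw [mul_assoc _ _ (osculatingCoeff f y), one_add_mul_mul_of_mul_one_add_mul hc]
    have hsub := (hasFDerivAt_id (𝕜 := ℝ) y).sub_const p
    have harg := (((hsub.mul_const' c).const_add 1).mul_const' h).mul'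
      ((hsub.const_mul c).const_add 1)
    refine ((hasFDerivAt_fderiv hfy).clm_apply harg).congr_fderiv
      (ContinuousLinearMap.ext fun k => ?_)
    have hk : fderiv ℝ f y ((1 + (y - p) * c) * h * (c * k) + k * (c * h * (1 + c * (y - p)))) +
        fderiv ℝ (fderiv ℝ f) y k ((1 + (y - p) * c) * h * (1 + c * (y - p))) = 0 := by
      rw [fderiv_fderiv_apply_of_pseudoconformal hfy (eventually_of_mem (hU.mem_nhds hy) hpc),
        mul_assoc k, hleft, hright, mul_assoc _ c k, add_comm, neg_add_eq_zero, add_comm]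
    simpa [mul_assoc] using hk
  simpa using eq_of_hasFDerivAt_zero hU hUc hderiv hx hp

theorem exists_eq_moebius_of_pseudoconformal (hU : IsOpen U) (hUc : IsPreconnected U)
    (hf : ContDiffOn ℝ 3 f U) (hpc : ∀ x ∈ U, Pseudoconformal f x) (hp : p ∈ U) :
    ∃ c : ℍ[ℝ], ∀ x ∈ U, 1 + c * (x - p) ≠ 0 ∧
      f x = f p + fderiv ℝ f p ((x - p) * (1 + c * (x - p))⁻¹) := by
  set c := osculatingCoeff f p
  have hne : ∀ y ∈ U, 1 + (y - p) * c ≠ 0 := fun y hy =>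
    one_add_mul_ne_zero_of_mul_one_add_mul (osculatingCoeff_mul_one_add hU hUc hf hpc hp hy)
  have hderiv : ∀ y ∈ U, HasFDerivAt
      (fun y => f y - fderiv ℝ f p ((y - p) * (1 + c * (y - p))⁻¹)) (0 : ℍ[ℝ] →L[ℝ] ℍ[ℝ]) y := by
    intro y hy
    have hne' := one_add_mul_ne_zero_swap (hne y hy)
    have hmoebius := (hasFDerivAt_mul_inv_one_add_mul hne').comp y
      ((hasFDerivAt_id y).sub_const p)
    refine ((hpc y hy).differentiableAt.hasFDerivAt.sub
      ((fderiv ℝ f p).hasFDerivAt.comp y hmoebius)).congr_fderiv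
      (ContinuousLinearMap.ext fun k => ?_)
    simp [← fderiv_one_add_mul_osculatingCoeff hU hUc hf hpc hp hy, mul_assoc,
      mul_inv_cancel_left₀ (hne y hy), hne', c]
  refine ⟨c, fun x hx => ⟨one_add_mul_ne_zero_swap (hne x hx), ?_⟩⟩
  simpa [sub_eq_iff_eq_add, add_comm] using eq_of_hasFDerivAt_zero hU hUc hderiv hx hp

theorem stmt_12_general (hU : IsOpen U) (hUc : IsPreconnected U) (h0 : (0 : ℍ[ℝ]) ∈ U)
    (hmaps : MapsTo f U U) (hf : ContDiffOn ℝ 3 f U) (hpc : ∀ ξ ∈ U, Pseudoconformal f ξ)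
    (hf0 : f 0 = 0) (hder : HasFDerivAt f (.id ℝ ℍ[ℝ]) 0) : ∀ z ∈ U, f z = z := by
  obtain ⟨c, hc⟩ := exists_eq_moebius_of_pseudoconformal hU hUc hf hpc h0
  simp only [hder.fderiv, hf0, sub_zero, zero_add, ContinuousLinearMap.id_apply] at hc
  have hfc : ∀ x ∈ U, f x * (1 + c * x) = x := fun x hx => by
    rw [(hc x hx).2, inv_mul_cancel_right₀ (hc x hx).1]
  have hc₀ : c = 0 :=
    eq_zero_of_mapsTo_of_apply_mul_one_add_eq (hU.mem_nhds h0) hmaps hfc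
  intro z hz
  simpa [hc₀] using (hc z hz).2

end Global

/-- Paper's Theorem 3.30 (Cartan-type uniqueness) over `ℍ`: a real-analytic
pseudoconformal self-surjection of a bounded domain containing `0`, fixing `0`
with derivative the identity at `0`, is the identity. -/
theorem stmt_12 (U : Set ℍ[ℝ]) (hU : IsOpen U) (hUb : Bornology.IsBounded U)
    (hUc : IsConnected U) (h0 : (0 : ℍ[ℝ]) ∈ U)
    (f : ℍ[ℝ] → ℍ[ℝ]) (hmaps : Set.MapsTo f U U) (hsurj : Set.SurjOn f U U)
    (han : AnalyticOnNhd ℝ f U) (hpc : ∀ ξ ∈ U, Pseudoconformal f ξ)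
    (hf0 : f 0 = 0)
    (hder : HasFDerivAt f (ContinuousLinearMap.id ℝ ℍ[ℝ]) 0) :
    ∀ z ∈ U, f z = z :=
  stmt_12_general hU hUc.isPreconnected h0 hmaps (han.contDiffOn hU.uniqueDiffOn) hpc hf0 hder
end

section
/- Let B := {z ∈ ℍ : ‖z‖ < 1} be the open unit ball of ℍ. Suppose f : B → B is a bijection of B onto itself, is real-analytic on B (as a map of ℝ⁴), and is pseudoconformal at every point of B. Then there exist a ∈ ℍ with ‖a‖ < 1 and quaternions u, v with ‖u‖ = ‖v‖ = 1 such that f(z) = (1 − (u*z*v) * star a)⁻¹ * (a − u*z*v) for all z ∈ B; that is, f = S_a ∘ (z ↦ u z v) where S_a(w) := (1 − w * star a)⁻¹ * (a − w). (Paper's Theorem 3.37 classifying the group of pseudoconformal diffeomorphisms of the unit ball, for one quaternion variable.) -/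
open scoped Quaternion

/-!
Let `f` be a conformal `C²` map of the unit ball into itself fixing `0`. Where `‖f‖²` touches a
radial function `W(‖x‖²)` from below, the first-order condition makes `f x` a multiple of `Df(x) x`.
Conformality then cancels the second derivatives of `f` along `x` and along an orthogonal vector of
the same length, so that adding the two second-order conditions leaves a differential inequality
for `W` alone. A barrier that violates it yields the Schwarz lemma `‖f x‖ ≤ ‖x‖`.

For a bijection, the Schwarz lemma applies to the inverse too, so `‖f x‖ = ‖x‖`. Differentiating
this identity and using conformality gives `Df(x) x = f x`, and Euler's relation makes `f` linear.
A Möbius transformation of the ball moves `f 0` to `0` and reduces the general case to this one.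
-/

open Filter Topology Set Metric Asymptotics

theorem second_deriv_nonpos_of_isLocalMax {φ φ' : ℝ → ℝ} {c t₀ : ℝ}
    (hφ : ∀ᶠ t in 𝓝 t₀, HasDerivAt φ (φ' t) t) (hφ' : HasDerivAt φ' c t₀)
    (hmax : IsLocalMax φ t₀) : c ≤ 0 := by
  have hderiv : deriv φ =ᶠ[𝓝 t₀] φ' := hφ.mono fun t ht => ht.deriv
  have hsnd : deriv (deriv φ) t₀ = c := by rw [hderiv.deriv_eq, hφ'.deriv]
  by_contra! hc
  have hmin : IsLocalMin φ t₀ := isLocalMin_of_deriv_deriv_pos (hsnd ▸ hc) hmax.deriv_eq_zero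
    hφ.self_of_nhds.continuousAt
  have hconst : φ =ᶠ[𝓝 t₀] fun _ => φ t₀ := by
    filter_upwards [hmax, hmin] with t using le_antisymm
  have hzero : c = 0 := by simpa [hsnd] using hconst.deriv.deriv_eq
  exact hc.ne' hzero

section Normed

variable {E F : Type*} [NormedAddCommGroup E] [NormedSpace ℝ E]
  [NormedAddCommGroup F] [NormedSpace ℝ F]

theorem hasFDerivAt_fderiv_of_contDiffAt_two {f : E → F} {x : E} (hf : ContDiffAt ℝ 2 f x) :
    HasFDerivAt (fderiv ℝ f) (fderiv ℝ (fderiv ℝ f) x) x :=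
  ((hf.fderiv_right (m := 1) (by norm_num)).differentiableAt one_ne_zero).hasFDerivAt

theorem hasDerivAt_add_smul (x h : E) (t : ℝ) : HasDerivAt (fun s : ℝ => x + s • h) h t := by
  simpa using ((hasDerivAt_id t).smul_const h).const_add x

theorem isLocalMax_comp_add_smul {u : E → ℝ} {x : E} (hmax : IsLocalMax u x) (h : E) :
    IsLocalMax (fun t : ℝ => u (x + t • h)) 0 :=
  IsLocalMax.comp_continuous (g := fun t : ℝ => x + t • h) (by simpa using hmax)
    (hasDerivAt_add_smul x h 0).continuousAt

theorem eq_fderiv_zero_of_fderiv_apply_self {f : E → F} {r : ℝ}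
    (hf : DifferentiableOn ℝ f (ball 0 r)) (heuler : ∀ x ∈ ball (0 : E) r, fderiv ℝ f x x = f x)
    {x : E} (hx : x ∈ ball 0 r) : f x = fderiv ℝ f 0 x := by
  have hderivAt {y : E} (hy : y ∈ ball (0 : E) r) : HasFDerivAt f (fderiv ℝ f y) y :=
    (hf.differentiableAt (isOpen_ball.mem_nhds hy)).hasFDerivAt
  have hzero : (0 : E) ∈ ball 0 r := mem_ball_self (pos_of_mem_ball hx)
  have hray {t : ℝ} (ht : 0 < t) (ht₁ : t ≤ 1) : t • x ∈ ball (0 : E) r := by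
    rw [mem_ball_zero_iff, norm_smul, Real.norm_of_nonneg ht.le]
    exact (mul_le_of_le_one_left (norm_nonneg x) ht₁).trans_lt (mem_ball_zero_iff.1 hx)
  have hderiv {t : ℝ} (ht : 0 < t) (ht₁ : t ≤ 1) :
      HasDerivAt (fun s : ℝ => s⁻¹ • f (s • x)) 0 t := by
    have hfray : HasDerivAt (fun s : ℝ => f (s • x)) (fderiv ℝ f (t • x) x) t :=
      (hderivAt (hray ht ht₁)).comp_hasDerivAt t (by simpa using (hasDerivAt_id t).smul_const x)
    refine ((hasDerivAt_inv ht.ne').smul hfray).congr_deriv ?_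
    rw [← heuler _ (hray ht ht₁), map_smul, smul_smul, ← add_smul]
    convert zero_smul ℝ _
    field_simp
    ring
  have hconst {t : ℝ} (ht : 0 < t) (ht₁ : t ≤ 1) : t⁻¹ • f (t • x) = f x := by
    have := constant_of_has_deriv_right_zero
      (fun s hs => (hderiv (ht.trans_le hs.1) hs.2).continuousAt.continuousWithinAt)
      (fun s hs => (hderiv (ht.trans_le hs.1) hs.2.le).hasDerivWithinAt) 1 (right_mem_Icc.2 ht₁)
    simpa using this.symm
  have hray₀ : HasDerivAt (fun s : ℝ => f (s • x)) (fderiv ℝ f 0 x) 0 :=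
    HasFDerivAt.comp_hasDerivAt_of_eq 0 (hderivAt hzero)
      (by simpa using (hasDerivAt_id (0 : ℝ)).smul_const x) (by simp)
  have hf0 : f 0 = 0 := by simpa using (heuler 0 hzero).symm
  refine tendsto_nhds_unique (tendsto_const_nhds.congr' ?_) hray₀.tendsto_slope_zero_right
  filter_upwards [Ioc_mem_nhdsGT one_pos] with t ⟨ht, ht₁⟩
  simpa [hf0] using (hconst ht ht₁).symm

theorem isConformalMap_of_norm_eq_mul {A : E →L[ℝ] F} {c : ℝ} (hc : 0 < c)
    (hA : ∀ x, ‖A x‖ = c * ‖x‖) : IsConformalMap A := by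
  let isometry : E →ₗᵢ[ℝ] F :=
    { toLinearMap := (c⁻¹ • A).toLinearMap
      norm_map' := fun x => by
        simp [norm_smul, hA, abs_of_pos hc, inv_mul_cancel_left₀ hc.ne'] }
  refine ⟨c, hc.ne', isometry, ?_⟩
  ext x
  simp [isometry, smul_smul, mul_inv_cancel₀ hc.ne']

variable [FiniteDimensional ℝ E]

theorem exists_continuousLinearEquiv_of_conformalAt {f : E → E} {x : E}
    (hf : ConformalAt f x) : ∃ A : E ≃L[ℝ] E, (A : E →L[ℝ] E) = fderiv ℝ f x :=
  ⟨(LinearEquiv.ofInjectiveEndo (fderiv ℝ f x).toLinearMap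
    (conformalAt_iff_isConformalMap_fderiv.1 hf).injective).toContinuousLinearEquiv, rfl⟩

theorem surjective_fderiv_of_conformalAt {f : E → E} {x : E}
    (hf : ConformalAt f x) : Function.Surjective (fderiv ℝ f x) := by
  obtain ⟨A, hA⟩ := exists_continuousLinearEquiv_of_conformalAt hf
  exact hA ▸ A.surjective

theorem contDiffAt_of_eventually_leftInverse {f g : E → E} {x : E} {n : WithTop ℕ∞} (hn : n ≠ 0)
    (hf : ContDiffAt ℝ n f x) (hconf : ConformalAt f x) (hgf : ∀ᶠ y in 𝓝 x, g (f y) = y) :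
    ContDiffAt ℝ n g (f x) := by
  obtain ⟨A, hA⟩ := exists_continuousLinearEquiv_of_conformalAt hconf
  have hfA : HasFDerivAt f (A : E →L[ℝ] E) x := hA ▸ hconf.differentiableAt.hasFDerivAt
  refine (hf.to_localInverse hfA hn).congr_of_eventuallyEq ?_
  exact (hf.hasStrictFDerivAt' hfA hn).localInverse_unique hgf

end Normed

section Contact

open scoped RealInnerProductSpace

variable {E F : Type*} [NormedAddCommGroup E] [InnerProductSpace ℝ E]
  [NormedAddCommGroup F] [InnerProductSpace ℝ F]

theorem hasDerivAt_norm_sq_sub_comp_add_smul {f : E → F} {W : ℝ → ℝ} {x h : E} {t w : ℝ}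
    (hf : DifferentiableAt ℝ f (x + t • h)) (hW : HasDerivAt W w (‖x + t • h‖ ^ 2)) :
    HasDerivAt (fun s : ℝ => ‖f (x + s • h)‖ ^ 2 - W (‖x + s • h‖ ^ 2))
      (2 * ⟪f (x + t • h), fderiv ℝ f (x + t • h) h⟫ - w * (2 * ⟪x + t • h, h⟫)) t := by
  have hline := hasDerivAt_add_smul x h t
  exact (hf.hasFDerivAt.comp_hasDerivAt t hline).norm_sq.sub (hW.comp t hline.norm_sq)

variable {f : E → F} {W : ℝ → ℝ} {x : E}

theorem inner_fderiv_eq_of_isLocalMax {w : ℝ} (hf : DifferentiableAt ℝ f x)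
    (hW : HasDerivAt W w (‖x‖ ^ 2)) (hmax : IsLocalMax (fun y => ‖f y‖ ^ 2 - W (‖y‖ ^ 2)) x)
    (h : E) : ⟪f x, fderiv ℝ f x h⟫ = w * ⟪x, h⟫ := by
  have hderiv := hasDerivAt_norm_sq_sub_comp_add_smul (f := f) (W := W) (x := x) (h := h)
    (t := 0) (w := w) (by simpa using hf) (by simpa using hW)
  have hzero := (isLocalMax_comp_add_smul hmax h).hasDerivAt_eq_zero hderiv
  simp only [zero_smul, add_zero] at hzero
  linarith

theorem inner_fderiv_fderiv_add_le_of_isLocalMax {W' : ℝ → ℝ} {w : ℝ} (hf : ContDiffAt ℝ 2 f x)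
    (hW : ∀ᶠ s in 𝓝 (‖x‖ ^ 2), HasDerivAt W (W' s) s) (hW' : HasDerivAt W' w (‖x‖ ^ 2))
    (hmax : IsLocalMax (fun y => ‖f y‖ ^ 2 - W (‖y‖ ^ 2)) x) (h : E) :
    ⟪f x, fderiv ℝ (fderiv ℝ f) x h h⟫ + ‖fderiv ℝ f x h‖ ^ 2 ≤
      2 * w * ⟪x, h⟫ ^ 2 + W' (‖x‖ ^ 2) * ‖h‖ ^ 2 := by
  have hline := hasDerivAt_add_smul x h 0
  have htend : Tendsto (fun t : ℝ => x + t • h) (𝓝 0) (𝓝 x) := by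
    simpa using hline.continuousAt.tendsto
  have hfst : ∀ᶠ t in 𝓝 (0 : ℝ), HasDerivAt
      (fun s : ℝ => ‖f (x + s • h)‖ ^ 2 - W (‖x + s • h‖ ^ 2))
      (2 * ⟪f (x + t • h), fderiv ℝ f (x + t • h) h⟫
        - W' (‖x + t • h‖ ^ 2) * (2 * ⟪x + t • h, h⟫)) t := by
    filter_upwards [htend.eventually (hf.eventually (by simp)),
      (htend.norm.pow 2).eventually hW] with t hft hWt
    exact hasDerivAt_norm_sq_sub_comp_add_smul (hft.differentiableAt two_ne_zero) hWt
  have hf₀ : HasDerivAt (fun t : ℝ => f (x + t • h)) (fderiv ℝ f x h) 0 :=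
    HasFDerivAt.comp_hasDerivAt_of_eq 0 (hf.differentiableAt two_ne_zero).hasFDerivAt hline
      (by simp)
  have hfderiv₀ : HasDerivAt (fun t : ℝ => fderiv ℝ f (x + t • h) h)
      (fderiv ℝ (fderiv ℝ f) x h h) 0 := by
    have hfdd := HasFDerivAt.comp_hasDerivAt_of_eq 0 (hasFDerivAt_fderiv_of_contDiffAt_two hf) hline
      (by simp)
    simpa using hfdd.clm_apply (hasDerivAt_const 0 h)
  have hW₀ : HasDerivAt (fun t : ℝ => W' (‖x + t • h‖ ^ 2)) (w * (2 * ⟪x, h⟫)) 0 := by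
    have hnorm : HasDerivAt (fun t : ℝ => ‖x + t • h‖ ^ 2) (2 * ⟪x, h⟫) 0 := by
      simpa using hline.norm_sq
    exact HasDerivAt.comp_of_eq 0 hW' hnorm (by simp)
  have hinner₀ : HasDerivAt (fun t : ℝ => ⟪x + t • h, h⟫) (‖h‖ ^ 2) 0 := by
    simpa using hline.inner ℝ (hasDerivAt_const 0 h)
  have hsnd := ((hf₀.inner ℝ hfderiv₀).const_mul 2).sub (hW₀.mul (hinner₀.const_mul 2))
  have hnonpos := second_deriv_nonpos_of_isLocalMax hfst hsnd (isLocalMax_comp_add_smul hmax h)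
  simp only [zero_smul, add_zero, real_inner_self_eq_norm_sq] at hnonpos
  linarith

end Contact

section Conformal

open scoped RealInnerProductSpace

variable {E F : Type*} [NormedAddCommGroup E] [InnerProductSpace ℝ E]
  [NormedAddCommGroup F] [InnerProductSpace ℝ F]

theorem exists_inner_fderiv_fderiv_add_eq [Nontrivial E] {f : E → F} {x : E}
    (hf : ContDiffAt ℝ 2 f x) (hconf : ∀ᶠ y in 𝓝 x, ConformalAt f y) :
    ∃ δ : E →L[ℝ] ℝ, ∀ l h k, ⟪fderiv ℝ f x h, fderiv ℝ (fderiv ℝ f) x l k⟫ +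
      ⟪fderiv ℝ (fderiv ℝ f) x l h, fderiv ℝ f x k⟫ = ⟪h, k⟫ * δ l := by
  obtain ⟨e, he⟩ := exists_norm_eq E zero_le_one
  have hfdd := hasFDerivAt_fderiv_of_contDiffAt_two hf
  have hfactor : DifferentiableAt ℝ (fun y => ‖fderiv ℝ f y e‖ ^ 2) x :=
    (hfdd.clm_apply (hasFDerivAt_const e x)).norm_sq.differentiableAt
  refine ⟨fderiv ℝ (fun y => ‖fderiv ℝ f y e‖ ^ 2) x, fun l h k => ?_⟩
  have hmetric : (fun y => ⟪fderiv ℝ f y h, fderiv ℝ f y k⟫) =ᶠ[𝓝 x]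
      fun y => ‖fderiv ℝ f y e‖ ^ 2 * ⟪h, k⟫ := by
    filter_upwards [hconf] with y hy
    obtain ⟨c, -, hc⟩ := conformalAt_iff'.1 hy
    rw [hc, ← real_inner_self_eq_norm_sq, hc, real_inner_self_eq_norm_sq, he, one_pow, mul_one]
  have hderiv := (hfdd.clm_apply (hasFDerivAt_const h x)).inner ℝ
    (hfdd.clm_apply (hasFDerivAt_const k x))
  have hunique := hderiv.unique
    ((hfactor.hasFDerivAt.mul_const ⟪h, k⟫).congr_of_eventuallyEq hmetric)
  simpa using DFunLike.congr_fun hunique l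

theorem inner_fderiv_fderiv_add_eq_zero {f : E → F} {x h k : E}
    (hf : ContDiffAt ℝ 2 f x) (hconf : ∀ᶠ y in 𝓝 x, ConformalAt f y)
    (horth : ⟪h, k⟫ = 0) (hnorm : ‖h‖ = ‖k‖) :
    ⟪fderiv ℝ (fderiv ℝ f) x h h + fderiv ℝ (fderiv ℝ f) x k k, fderiv ℝ f x h⟫ = 0 := by
  cases subsingleton_or_nontrivial E with
  | inl _ => simp [Subsingleton.elim h 0]
  | inr _ =>
    obtain ⟨δ, hδ⟩ := exists_inner_fderiv_fderiv_add_eq hf hconf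
    have hsymm : fderiv ℝ (fderiv ℝ f) x k h = fderiv ℝ (fderiv ℝ f) x h k :=
      hf.isSymmSndFDerivAt (by simp) k h
    have hhh := hδ h h h
    have hhk := hδ h k k
    have hkh := hδ k h k
    rw [horth, zero_mul, hsymm] at hkh
    rw [real_inner_self_eq_norm_sq, real_inner_comm] at hhh
    rw [real_inner_self_eq_norm_sq, ← hnorm, ← hhh, real_inner_comm] at hhk
    rw [inner_add_left, real_inner_comm (fderiv ℝ f x h) (fderiv ℝ (fderiv ℝ f) x k k)]
    linarith

theorem exists_inner_eq_zero_norm_eq (hE : 1 < Module.finrank ℝ E) (x : E) :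
    ∃ k : E, ⟪x, k⟫ = 0 ∧ ‖k‖ = ‖x‖ := by
  have := FiniteDimensional.of_finrank_pos (zero_lt_one.trans hE)
  have hsum := (ℝ ∙ x).finrank_add_finrank_orthogonal
  have hle : Module.finrank ℝ (ℝ ∙ x) ≤ 1 := by
    simpa using finrank_span_le_card (R := ℝ) ({x} : Set E)
  have : Nontrivial (ℝ ∙ x)ᗮ := Module.nontrivial_of_finrank_pos (R := ℝ) (by lia)
  obtain ⟨k, hk⟩ := exists_norm_eq (ℝ ∙ x)ᗮ (norm_nonneg x)
  exact ⟨k, Submodule.mem_orthogonal_singleton_iff_inner_right.1 k.2, hk⟩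

theorem eq_smul_of_inner_eq {A : E → F} (hA : Function.Surjective A) {L c : ℝ} (hL : L ≠ 0)
    (hconf : ∀ h k, ⟪A h, A k⟫ = L * ⟪h, k⟫) {v : F} {x : E}
    (hv : ∀ k, ⟪v, A k⟫ = c * ⟪x, k⟫) : v = (c / L) • A x := by
  refine ext_inner_right ℝ fun y => ?_
  obtain ⟨k, rfl⟩ := hA y
  rw [real_inner_smul_left, hconf, hv, ← mul_assoc, div_mul_cancel₀ c hL]

theorem norm_sq_mul_sq_le_of_isLocalMax (hE : 1 < Module.finrank ℝ E) {f : E → E} {x : E}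
    {W W' : ℝ → ℝ} {w : ℝ} (hf : ContDiffAt ℝ 2 f x) (hconf : ∀ᶠ y in 𝓝 x, ConformalAt f y)
    (hW : ∀ᶠ s in 𝓝 (‖x‖ ^ 2), HasDerivAt W (W' s) s) (hW' : HasDerivAt W' w (‖x‖ ^ 2))
    (hmax : IsLocalMax (fun y => ‖f y‖ ^ 2 - W (‖y‖ ^ 2)) x) (hcontact : ‖f x‖ ^ 2 = W (‖x‖ ^ 2))
    (hx : x ≠ 0) :
    ‖x‖ ^ 2 * W' (‖x‖ ^ 2) ^ 2 ≤ W (‖x‖ ^ 2) * (W' (‖x‖ ^ 2) + ‖x‖ ^ 2 * w) := by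
  have := FiniteDimensional.of_finrank_pos (zero_lt_one.trans hE)
  set s := ‖x‖ ^ 2 with hs
  have hspos : 0 < s := by positivity
  obtain ⟨L, hL, hconfx⟩ := conformalAt_iff'.1 hconf.self_of_nhds
  obtain ⟨k, hxk, hk⟩ := exists_inner_eq_zero_norm_eq hE x
  have hfx : f x = (W' s / L) • fderiv ℝ f x x :=
    eq_smul_of_inner_eq (surjective_fderiv_of_conformalAt hconf.self_of_nhds) hL.ne' hconfx
      (inner_fderiv_eq_of_isLocalMax (hf.differentiableAt two_ne_zero) hW.self_of_nhds hmax)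
  have hnorm (h : E) : ‖fderiv ℝ f x h‖ ^ 2 = L * ‖h‖ ^ 2 := by
    rw [← real_inner_self_eq_norm_sq, hconfx, real_inner_self_eq_norm_sq]
  have hWL : W s * L = W' s ^ 2 * s := by
    rw [← hcontact, hfx, norm_smul, mul_pow, hnorm, norm_div, div_pow, Real.norm_eq_abs, sq_abs,
      Real.norm_eq_abs, sq_abs, ← hs]
    field_simp
  have hcancel : ⟪f x, fderiv ℝ (fderiv ℝ f) x x x⟫ + ⟪f x, fderiv ℝ (fderiv ℝ f) x k k⟫ = 0 := by
    rw [← inner_add_right, hfx, real_inner_smul_left, real_inner_comm,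
      inner_fderiv_fderiv_add_eq_zero hf hconf hxk hk.symm, mul_zero]
  have hradial := inner_fderiv_fderiv_add_le_of_isLocalMax hf hW hW' hmax x
  have htangential := inner_fderiv_fderiv_add_le_of_isLocalMax hf hW hW' hmax k
  rw [hnorm, real_inner_self_eq_norm_sq, ← hs] at hradial
  rw [hnorm, hxk, hk, ← hs] at htangential
  have hLle : L ≤ W' s + s * w := by nlinarith
  calc s * W' s ^ 2 = W s * L := by rw [hWL, mul_comm]
    _ ≤ W s * (W' s + s * w) := mul_le_mul_of_nonneg_left hLle (hcontact ▸ sq_nonneg _)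

theorem conformalAt_of_eventually_leftInverse [FiniteDimensional ℝ E] {f g : E → E} {x : E}
    (hconf : ConformalAt f x) (hg : DifferentiableAt ℝ g (f x))
    (hgf : ∀ᶠ y in 𝓝 x, g (f y) = y) :
    ConformalAt g (f x) := by
  obtain ⟨L, hL, hconfx⟩ := conformalAt_iff'.1 hconf
  have hinv (h : E) : fderiv ℝ g (f x) (fderiv ℝ f x h) = h := by
    have hcomp := hg.hasFDerivAt.comp x hconf.differentiableAt.hasFDerivAt
    have := hcomp.unique ((hasFDerivAt_id x).congr_of_eventuallyEq hgf)
    exact DFunLike.congr_fun this h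
  refine conformalAt_iff'.2 ⟨L⁻¹, inv_pos.2 hL, fun u v => ?_⟩
  obtain ⟨h, rfl⟩ := surjective_fderiv_of_conformalAt hconf u
  obtain ⟨k, rfl⟩ := surjective_fderiv_of_conformalAt hconf v
  rw [hinv, hinv, hconfx, inv_mul_cancel_left₀ hL.ne']

end Conformal

section Schwarz

/-- The radial barrier with which `‖f x‖ ^ 2` is compared in the Schwarz lemma, as a function of
`s = ‖x‖ ^ 2`. It tends to `s` as `ε → 0`. The logarithm makes the barrier `W` dominate `s` near
`0`, and it violates the contact inequality `s W' ^ 2 ≤ W (W' + s W'')`, since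
`s W' ^ 2 - W (W' + s W'') = s ε ^ 2`. -/
noncomputable def schwarzBarrier (ε s : ℝ) : ℝ :=
  s * (1 - ε * Real.log s)

theorem one_le_one_sub_mul_log {ε s : ℝ} (hε : 0 ≤ ε) (hs : 0 ≤ s) (hs₁ : s ≤ 1) :
    1 ≤ 1 - ε * Real.log s := by
  have := mul_nonneg hε (neg_nonneg.2 (Real.log_nonpos hs hs₁))
  linarith

theorem schwarzBarrier_pos {ε s : ℝ} (hε : 0 ≤ ε) (hs : 0 < s) (hs₁ : s ≤ 1) :
    0 < schwarzBarrier ε s :=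
  mul_pos hs (zero_lt_one.trans_le (one_le_one_sub_mul_log hε hs.le hs₁))

theorem hasDerivAt_schwarzBarrier (ε : ℝ) {s : ℝ} (hs : s ≠ 0) :
    HasDerivAt (schwarzBarrier ε) (1 - ε * Real.log s - ε) s := by
  refine ((hasDerivAt_id' s).mul
    (((Real.hasDerivAt_log hs).const_mul ε).const_sub 1)).congr_deriv ?_
  rw [one_mul, mul_neg, mul_left_comm, mul_inv_cancel₀ hs, mul_one, ← sub_eq_add_neg]

theorem hasDerivAt_deriv_schwarzBarrier (ε : ℝ) {s : ℝ} (hs : s ≠ 0) :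
    HasDerivAt (fun s => 1 - ε * Real.log s - ε) (-(ε * s⁻¹)) s :=
  (((Real.hasDerivAt_log hs).const_mul ε).const_sub 1).sub_const ε

theorem continuousOn_norm_sq_div_schwarzBarrier {E F : Type*} [NormedAddCommGroup E]
    [NormedSpace ℝ E] [NormedAddCommGroup F] [NormedSpace ℝ F] {f : E → F} {ε r : ℝ}
    (hε : 0 < ε) (hr : r < 1) (hf : ContinuousOn f (closedBall 0 r))
    (hf₀ : DifferentiableAt ℝ f 0) (hf0 : f 0 = 0) :
    ContinuousOn (fun y => ‖f y‖ ^ 2 / schwarzBarrier ε (‖y‖ ^ 2)) (closedBall 0 r) := by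
  intro x hx
  rcases eq_or_ne x 0 with rfl | hx₀
  · -- The value at `0` is `0 / 0 = 0`, which is also the limit.
    refine (continuousAt_iff_punctured_nhds.2 ?_).continuousWithinAt
    have hbigO : (fun y => ‖f y‖ ^ 2) =O[𝓝[≠] 0] fun y : E => ‖y‖ ^ 2 := by
      have := hf₀.isBigO_sub
      simp only [hf0, sub_zero] at this
      exact (this.norm_norm.pow 2).mono nhdsWithin_le_nhds
    have hlog : Tendsto (fun y : E => 1 - ε * Real.log (‖y‖ ^ 2)) (𝓝[≠] 0) atTop := by
      have hsq : Tendsto (fun y : E => ‖y‖ ^ 2) (𝓝[≠] 0) (𝓝[≠] 0) := by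
        refine tendsto_nhdsWithin_iff.2 ⟨?_, ?_⟩
        · exact (Continuous.tendsto' (by fun_prop) _ _ (by simp)).mono_left nhdsWithin_le_nhds
        · filter_upwards [self_mem_nhdsWithin] with y hy
          simpa using hy
      have := ((Real.tendsto_log_nhdsNE_zero.comp hsq).const_mul_atBot hε)
      simpa [sub_eq_add_neg] using
        tendsto_atTop_add_const_left _ 1 (tendsto_neg_atBot_atTop.comp this)
    have hlittleO := hbigO.mul_isLittleO ((isLittleO_one_left_iff ℝ).2
      (tendsto_norm_atTop_atTop.comp hlog))
    simpa [schwarzBarrier, hf0] using hlittleO.tendsto_div_nhds_zero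
  · have hs : 0 < ‖x‖ ^ 2 := by positivity
    have hx₁ : ‖x‖ ^ 2 ≤ 1 :=
      pow_le_one₀ (norm_nonneg x) ((mem_closedBall_zero_iff.1 hx).trans hr.le)
    have hbarrier : ContinuousAt (fun y : E => schwarzBarrier ε (‖y‖ ^ 2)) x :=
      (hasDerivAt_schwarzBarrier ε hs.ne').continuousAt.comp (f := fun y : E => ‖y‖ ^ 2)
        (by fun_prop)
    exact ((hf x hx).norm.pow 2).div hbarrier.continuousWithinAt
      (schwarzBarrier_pos hε.le hs hx₁).ne'

variable {E : Type*} [NormedAddCommGroup E] [InnerProductSpace ℝ E]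

theorem not_isLocalMax_norm_sq_div_schwarzBarrier (hE : 1 < Module.finrank ℝ E) {f : E → E} {x : E}
    {ε : ℝ} (hε : 0 < ε) (hf : ContDiffAt ℝ 2 f x) (hconf : ∀ᶠ y in 𝓝 x, ConformalAt f y)
    (hx : x ≠ 0) (hx₁ : ‖x‖ < 1) (hfx : f x ≠ 0) :
    ¬ IsLocalMax (fun y => ‖f y‖ ^ 2 / schwarzBarrier ε (‖y‖ ^ 2)) x := by
  intro hmax
  have hpos {y : E} (hy : y ≠ 0) (hy₁ : ‖y‖ < 1) : 0 < schwarzBarrier ε (‖y‖ ^ 2) :=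
    schwarzBarrier_pos hε.le (by positivity) (pow_le_one₀ (norm_nonneg y) hy₁.le)
  have hs : 0 < ‖x‖ ^ 2 := by positivity
  set q := ‖f x‖ ^ 2 / schwarzBarrier ε (‖x‖ ^ 2)
  have hqpos : 0 < q := div_pos (by positivity) (hpos hx hx₁)
  have hcontact : ‖f x‖ ^ 2 = q * schwarzBarrier ε (‖x‖ ^ 2) :=
    (div_mul_cancel₀ _ (hpos hx hx₁).ne').symm
  have hmax' : IsLocalMax (fun y => ‖f y‖ ^ 2 - q * schwarzBarrier ε (‖y‖ ^ 2)) x := by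
    filter_upwards [hmax, eventually_ne_nhds hx,
      continuous_norm.continuousAt.eventually_lt_const hx₁] with y hle hy hy₁
    have := (div_le_iff₀ (hpos hy hy₁)).1 hle
    linarith
  have hineq := norm_sq_mul_sq_le_of_isLocalMax hE hf hconf
    ((eventually_ne_nhds hs.ne').mono fun s hs => (hasDerivAt_schwarzBarrier ε hs).const_mul q)
    ((hasDerivAt_deriv_schwarzBarrier ε hs.ne').const_mul q) hmax' hcontact hx
  have hcross : ‖x‖ ^ 2 * (q * -(ε * (‖x‖ ^ 2)⁻¹)) = -(q * ε) := by
    field_simp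
  rw [hcross, schwarzBarrier] at hineq
  have hgap : 0 < q ^ 2 * (‖x‖ ^ 2 * ε ^ 2) := by positivity
  linarith

theorem norm_sq_mul_schwarzBarrier_le (hE : 1 < Module.finrank ℝ E) {f : E → E}
    (hf : ContDiffOn ℝ 2 f (ball 0 1)) (hconf : ∀ x ∈ ball (0 : E) 1, ConformalAt f x)
    (hmaps : MapsTo f (ball 0 1) (closedBall 0 1)) (hf0 : f 0 = 0) {ε r : ℝ} (hε : 0 < ε)
    (hr : 0 < r) (hr₁ : r < 1) {x : E} (hx : ‖x‖ ≤ r) :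
    ‖f x‖ ^ 2 * schwarzBarrier ε (r ^ 2) ≤ schwarzBarrier ε (‖x‖ ^ 2) := by
  have := FiniteDimensional.of_finrank_pos (zero_lt_one.trans hE)
  rcases eq_or_ne x 0 with rfl | hx₀
  · simp [hf0, schwarzBarrier]
  have hrpos : 0 < schwarzBarrier ε (r ^ 2) :=
    schwarzBarrier_pos hε.le (by positivity) (pow_le_one₀ hr.le hr₁.le)
  have hxpos : 0 < schwarzBarrier ε (‖x‖ ^ 2) :=
    schwarzBarrier_pos hε.le (by positivity) (pow_le_one₀ (norm_nonneg x) (hx.trans hr₁.le))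
  have hsub : closedBall (0 : E) r ⊆ ball 0 1 := closedBall_subset_ball hr₁
  obtain ⟨z, hz, hzmax⟩ := (isCompact_closedBall (0 : E) r).exists_isMaxOn
    (nonempty_closedBall.2 hr.le)
    (continuousOn_norm_sq_div_schwarzBarrier hε hr₁ (hf.continuousOn.mono hsub)
      (hconf 0 (mem_ball_self one_pos)).differentiableAt hf0)
  suffices hbound : ‖f z‖ ^ 2 / schwarzBarrier ε (‖z‖ ^ 2) ≤ 1 / schwarzBarrier ε (r ^ 2) by
    have hxle := (hzmax (mem_closedBall_zero_iff.2 hx)).trans hbound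
    simpa using (div_le_div_iff₀ hxpos hrpos).1 hxle
  by_cases hfz : f z = 0
  · simpa [hfz] using hrpos.le
  have hz₀ : z ≠ 0 := by
    rintro rfl
    exact hfz hf0
  have hzball : ball (0 : E) 1 ∈ 𝓝 z := isOpen_ball.mem_nhds (hsub hz)
  have hzr : ‖z‖ = r := by
    refine (mem_closedBall_zero_iff.1 hz).eq_of_not_lt fun hlt => ?_
    exact not_isLocalMax_norm_sq_div_schwarzBarrier hE hε (hf.contDiffAt hzball)
      (eventually_of_mem hzball hconf) hz₀ (hlt.trans hr₁) hfz
      (hzmax.isLocalMax (mem_of_superset (isOpen_ball.mem_nhds (mem_ball_zero_iff.2 hlt))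
        ball_subset_closedBall))
  have hfz₁ : ‖f z‖ ≤ 1 := mem_closedBall_zero_iff.1 (hmaps (hsub hz))
  rw [hzr]
  gcongr
  exact pow_le_one₀ (norm_nonneg _) hfz₁

theorem norm_le_norm_of_mapsTo_ball (hE : 1 < Module.finrank ℝ E) {f : E → E}
    (hf : ContDiffOn ℝ 2 f (ball 0 1)) (hconf : ∀ x ∈ ball (0 : E) 1, ConformalAt f x)
    (hmaps : MapsTo f (ball 0 1) (closedBall 0 1)) (hf0 : f 0 = 0) {x : E} (hx : ‖x‖ < 1) :
    ‖f x‖ ≤ ‖x‖ := by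
  have hleft : Tendsto (fun t : ℝ => ‖f x‖ ^ 2 * schwarzBarrier t ((1 - t) ^ 2)) (𝓝[>] 0)
      (𝓝 (‖f x‖ ^ 2)) := by
    have : ContinuousAt (fun t : ℝ => ‖f x‖ ^ 2 * schwarzBarrier t ((1 - t) ^ 2)) 0 := by
      unfold schwarzBarrier
      fun_prop (disch := norm_num)
    simpa [ContinuousAt, schwarzBarrier] using this.tendsto.mono_left nhdsWithin_le_nhds
  have hright : Tendsto (fun t : ℝ => schwarzBarrier t (‖x‖ ^ 2)) (𝓝[>] 0) (𝓝 (‖x‖ ^ 2)) := by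
    have : Continuous fun t : ℝ => schwarzBarrier t (‖x‖ ^ 2) := by
      unfold schwarzBarrier
      fun_prop
    exact (this.tendsto' 0 _ (by simp [schwarzBarrier])).mono_left nhdsWithin_le_nhds
  have hsq : ‖f x‖ ^ 2 ≤ ‖x‖ ^ 2 := by
    refine le_of_tendsto_of_tendsto hleft hright ?_
    filter_upwards [Ioo_mem_nhdsGT (sub_pos.2 hx)] with t ⟨ht, htx⟩
    exact norm_sq_mul_schwarzBarrier_le hE hf hconf hmaps hf0 ht
      (by linarith [norm_nonneg x]) (by linarith) (by linarith)
  exact (sq_le_sq₀ (norm_nonneg _) (norm_nonneg _)).1 hsq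

end Schwarz

section Rigidity

open scoped RealInnerProductSpace

variable {E : Type*} [NormedAddCommGroup E] [InnerProductSpace ℝ E]

theorem norm_eq_norm_of_bijOn_ball (hE : 1 < Module.finrank ℝ E) {f : E → E}
    (hbij : BijOn f (ball 0 1) (ball 0 1)) (hf : ContDiffOn ℝ 2 f (ball 0 1))
    (hconf : ∀ x ∈ ball (0 : E) 1, ConformalAt f x) (hf0 : f 0 = 0) {x : E} (hx : ‖x‖ < 1) :
    ‖f x‖ = ‖x‖ := by
  have := FiniteDimensional.of_finrank_pos (zero_lt_one.trans hE)
  set g := Function.invFunOn f (ball 0 1)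
  have hgf : LeftInvOn g f (ball 0 1) := hbij.injOn.leftInvOn_invFunOn
  have hgmaps : MapsTo g (ball 0 1) (ball 0 1) := hbij.surjOn.mapsTo_invFunOn
  have hgf_near {y : E} (hy : y ∈ ball (0 : E) 1) : ∀ᶠ z in 𝓝 y, g (f z) = z :=
    eventually_of_mem (isOpen_ball.mem_nhds hy) hgf
  have hg {y : E} (hy : y ∈ ball (0 : E) 1) : ContDiffAt ℝ 2 g (f y) :=
    contDiffAt_of_eventually_leftInverse two_ne_zero (hf.contDiffAt (isOpen_ball.mem_nhds hy))
      (hconf y hy) (hgf_near hy)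
  have hgdiff : ContDiffOn ℝ 2 g (ball 0 1) := by
    intro w hw
    obtain ⟨y, hy, rfl⟩ := hbij.surjOn hw
    exact (hg hy).contDiffWithinAt
  have hgconf : ∀ w ∈ ball (0 : E) 1, ConformalAt g w := by
    intro w hw
    obtain ⟨y, hy, rfl⟩ := hbij.surjOn hw
    exact conformalAt_of_eventually_leftInverse (hconf y hy)
      ((hg hy).differentiableAt two_ne_zero) (hgf_near hy)
  have hg0 : g 0 = 0 := by simpa [hf0] using hgf (mem_ball_self one_pos)
  have hxball : x ∈ ball (0 : E) 1 := mem_ball_zero_iff.2 hx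
  have hfx : ‖f x‖ < 1 := mem_ball_zero_iff.1 (hbij.mapsTo hxball)
  refine le_antisymm ?_ ?_
  · exact norm_le_norm_of_mapsTo_ball hE hf hconf
      (hbij.mapsTo.mono_right ball_subset_closedBall) hf0 hx
  · simpa only [hgf hxball] using norm_le_norm_of_mapsTo_ball hE hgdiff hgconf
      (hgmaps.mono_right ball_subset_closedBall) hg0 hfx

theorem fderiv_apply_self_of_norm_eq [FiniteDimensional ℝ E] {f : E → E} {x : E}
    (hconf : ConformalAt f x) (hnorm : ∀ᶠ y in 𝓝 x, ‖f y‖ = ‖y‖) : fderiv ℝ f x x = f x := by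
  obtain ⟨L, hL, hconfx⟩ := conformalAt_iff'.1 hconf
  have hradial (k : E) : ⟪f x, fderiv ℝ f x k⟫ = 1 * ⟪x, k⟫ := by
    have hsq : (fun y => ‖f y‖ ^ 2) =ᶠ[𝓝 x] fun y => ‖y‖ ^ 2 :=
      hnorm.mono fun y hy => by simp only [hy]
    have := hconf.differentiableAt.hasFDerivAt.norm_sq.unique
      ((hasFDerivAt_id x).norm_sq.congr_of_eventuallyEq hsq)
    simpa using DFunLike.congr_fun this k
  have hfx : f x = (1 / L) • fderiv ℝ f x x :=
    eq_smul_of_inner_eq (surjective_fderiv_of_conformalAt hconf) hL.ne' hconfx hradial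
  rcases eq_or_ne x 0 with rfl | hx
  · rw [map_zero, eq_comm, ← norm_eq_zero, hnorm.self_of_nhds, norm_zero]
  have hscale : 1 * ‖x‖ ^ 2 = (1 / L) * ‖x‖ ^ 2 :=
    calc 1 * ‖x‖ ^ 2 = ⟪f x, (1 / L) • fderiv ℝ f x x⟫ := by
          rw [← hfx, real_inner_self_eq_norm_sq, hnorm.self_of_nhds, one_mul]
      _ = (1 / L) * ‖x‖ ^ 2 := by
          rw [real_inner_smul_right, hradial, one_mul, real_inner_self_eq_norm_sq]
  rw [hfx, ← mul_right_cancel₀ (by positivity) hscale, one_smul]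

theorem eq_fderiv_zero_of_bijOn_ball (hE : 1 < Module.finrank ℝ E) {f : E → E}
    (hbij : BijOn f (ball 0 1) (ball 0 1)) (hf : ContDiffOn ℝ 2 f (ball 0 1))
    (hconf : ∀ x ∈ ball (0 : E) 1, ConformalAt f x) (hf0 : f 0 = 0) {x : E}
    (hx : x ∈ ball 0 1) : f x = fderiv ℝ f 0 x := by
  have := FiniteDimensional.of_finrank_pos (zero_lt_one.trans hE)
  refine eq_fderiv_zero_of_fderiv_apply_self (hf.differentiableOn two_ne_zero) (fun y hy => ?_) hx
  refine fderiv_apply_self_of_norm_eq (hconf y hy) ?_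
  filter_upwards [isOpen_ball.mem_nhds hy] with z hz
  exact norm_eq_norm_of_bijOn_ball hE hbij hf hconf hf0 (mem_ball_zero_iff.1 hz)

end Rigidity

namespace Pseudoconformal

theorem conformalAt {f : ℍ[ℝ] → ℍ[ℝ]} {x : ℍ[ℝ]} (hf : Pseudoconformal f x) :
    ConformalAt f x := by
  obtain ⟨A, a, b, ha, hb, hfA, hA⟩ := hf
  refine ⟨A, hfA, isConformalMap_of_norm_eq_mul (c := ‖a‖ * ‖b‖) (by positivity) fun h => ?_⟩
  rw [hA, norm_mul, norm_mul, mul_right_comm]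

theorem comp {f g : ℍ[ℝ] → ℍ[ℝ]} {x : ℍ[ℝ]} (hg : Pseudoconformal g (f x))
    (hf : Pseudoconformal f x) : Pseudoconformal (g ∘ f) x := by
  obtain ⟨B, c, d, hc, hd, hgB, hB⟩ := hg
  obtain ⟨A, a, b, ha, hb, hfA, hA⟩ := hf
  refine ⟨B.comp A, c * a, b * d, mul_ne_zero hc ha, mul_ne_zero hb hd, hgB.comp x hfA, fun h => ?_⟩
  simp only [ContinuousLinearMap.comp_apply, hA, hB, mul_assoc]

end Pseudoconformal

section Moebius

open scoped RealInnerProductSpace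

/-- The involutive Möbius transformation `S_a` of the quaternionic unit ball exchanging `0` and
`a`. -/
noncomputable def moebius (a w : ℍ[ℝ]) : ℍ[ℝ] :=
  (1 - w * star a)⁻¹ * (a - w)

theorem moebius_self (a : ℍ[ℝ]) : moebius a a = 0 := by
  simp [moebius]

theorem one_sub_mul_ne_zero_of_norm_lt_one {R : Type*} [NormedRing R] [NormOneClass R] {a b : R}
    (ha : ‖a‖ < 1) (hb : ‖b‖ < 1) : 1 - a * b ≠ 0 := by
  intro h
  have hlt : ‖a * b‖ < 1 := (norm_mul_le a b).trans_lt
    (mul_lt_one_of_nonneg_of_lt_one_left (norm_nonneg a) ha hb.le)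
  rw [← sub_eq_zero.1 h, norm_one] at hlt
  exact lt_irrefl 1 hlt

theorem norm_one_sub_mul_star_sq (a w : ℍ[ℝ]) :
    ‖1 - w * star a‖ ^ 2 = 1 - 2 * ⟪a, w⟫ + ‖a‖ ^ 2 * ‖w‖ ^ 2 := by
  have hinner : ⟪1, w * star a⟫ = ⟪a, w⟫ := by
    simp [Quaternion.inner_def]
  rw [norm_sub_sq_real, hinner, norm_mul, norm_star, norm_one, mul_pow]
  ring

variable {a w : ℍ[ℝ]}

theorem one_sub_mul_star_ne_zero (ha : ‖a‖ < 1) (hw : ‖w‖ < 1) : 1 - w * star a ≠ 0 :=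
  one_sub_mul_ne_zero_of_norm_lt_one hw ((norm_star a).trans_lt ha)

theorem one_sub_norm_moebius_sq_mul (ha : ‖a‖ < 1) (hw : ‖w‖ < 1) :
    (1 - ‖moebius a w‖ ^ 2) * ‖1 - w * star a‖ ^ 2 = (1 - ‖a‖ ^ 2) * (1 - ‖w‖ ^ 2) := by
  have hden : ‖1 - w * star a‖ ≠ 0 := norm_ne_zero_iff.2 (one_sub_mul_star_ne_zero ha hw)
  have hnum : ‖moebius a w‖ ^ 2 * ‖1 - w * star a‖ ^ 2 = ‖a - w‖ ^ 2 := by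
    rw [moebius, norm_mul, norm_inv]
    field_simp
  rw [sub_mul, hnum, norm_one_sub_mul_star_sq, norm_sub_sq_real]
  ring

theorem norm_moebius_lt_one (ha : ‖a‖ < 1) (hw : ‖w‖ < 1) : ‖moebius a w‖ < 1 := by
  have hpos : 0 < (1 - ‖moebius a w‖ ^ 2) * ‖1 - w * star a‖ ^ 2 := by
    rw [one_sub_norm_moebius_sq_mul ha hw]
    exact mul_pos (sub_pos.2 (pow_lt_one₀ (norm_nonneg a) ha two_ne_zero))
      (sub_pos.2 (pow_lt_one₀ (norm_nonneg w) hw two_ne_zero))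
  have := pos_of_mul_pos_left hpos (by positivity)
  exact (sq_lt_one_iff₀ (norm_nonneg _)).1 (sub_pos.1 this)

theorem moebius_moebius (ha : ‖a‖ < 1) (hw : ‖w‖ < 1) : moebius a (moebius a w) = w := by
  have hden := one_sub_mul_star_ne_zero ha hw
  have hdenS := one_sub_mul_star_ne_zero ha (norm_moebius_lt_one ha hw)
  have hS : (1 - w * star a) * moebius a w = a - w := by
    rw [moebius, mul_inv_cancel_left₀ hden]
  have hcomm : w * star a * a = a * star a * w := by
    rw [mul_assoc, Quaternion.star_mul_self, Quaternion.self_mul_star, Quaternion.coe_commutes]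
  rw [moebius, inv_mul_eq_iff_eq_mul₀ hdenS]
  refine mul_left_cancel₀ hden ?_
  calc (1 - w * star a) * (a - moebius a w) = a - w * star a * a - (a - w) := by
        rw [mul_sub, hS, sub_mul, one_mul]
    _ = w - w * star a * w - (a - w) * star a * w := by
        rw [hcomm]
        noncomm_ring
    _ = (1 - w * star a) * ((1 - moebius a w * star a) * w) := by
        rw [← hS]
        noncomm_ring

theorem pseudoconformal_moebius (ha : ‖a‖ < 1) (hw : ‖w‖ < 1) :
    Pseudoconformal (moebius a) w := by
  have hden := one_sub_mul_star_ne_zero ha hw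
  have hdenDeriv : HasFDerivAt (fun w : ℍ[ℝ] => 1 - w * star a)
      (-(ContinuousLinearMap.mul ℝ ℍ[ℝ]).flip (star a)) w :=
    ((ContinuousLinearMap.mul ℝ ℍ[ℝ]).flip (star a)).hasFDerivAt.const_sub 1
  have hderiv := ((hasFDerivAt_inv' (𝕜 := ℝ) hden).comp w hdenDeriv).mul'
    ((hasFDerivAt_id (𝕜 := ℝ) w).const_sub a)
  have hfactor : 1 - star a * moebius a w ≠ 0 :=
    one_sub_mul_ne_zero_of_norm_lt_one ((norm_star a).trans_lt ha) (norm_moebius_lt_one ha hw)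
  refine ⟨_, (1 - w * star a)⁻¹, -(1 - star a * moebius a w), inv_ne_zero hden,
    neg_ne_zero.2 hfactor, hderiv, fun h => ?_⟩
  suffices hformula : (1 - w * star a)⁻¹ * (h * star a) * (1 - w * star a)⁻¹ * (a - w) -
      (1 - w * star a)⁻¹ * h =
        (1 - w * star a)⁻¹ * h * -(1 - star a * moebius a w) by
    rw [← hformula]
    simp [sub_eq_neg_add]
  rw [moebius]
  noncomm_ring

theorem contDiffAt_moebius {n : WithTop ℕ∞} (ha : ‖a‖ < 1) (hw : ‖w‖ < 1) :
    ContDiffAt ℝ n (moebius a) w := by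
  have hinv : ContDiffAt ℝ n (Inv.inv : ℍ[ℝ] → ℍ[ℝ]) (1 - w * star a) :=
    Ring.inverse_eq_inv' (G₀ := ℍ[ℝ]) ▸
      contDiffAt_ringInverse ℝ (Units.mk0 _ (one_sub_mul_star_ne_zero ha hw))
  exact (hinv.comp (f := fun w : ℍ[ℝ] => 1 - w * star a) w (by fun_prop)).mul (by fun_prop)

theorem bijOn_moebius (ha : ‖a‖ < 1) : BijOn (moebius a) (ball 0 1) (ball 0 1) := by
  have hmaps : MapsTo (moebius a) (ball 0 1) (ball 0 1) := fun w hw =>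
    mem_ball_zero_iff.2 (norm_moebius_lt_one ha (mem_ball_zero_iff.1 hw))
  have hinv : LeftInvOn (moebius a) (moebius a) (ball 0 1) := fun w hw =>
    moebius_moebius ha (mem_ball_zero_iff.1 hw)
  exact InvOn.bijOn ⟨hinv, hinv⟩ hmaps hmaps

end Moebius

theorem exists_norm_eq_one_mul_mul_eq {a b : ℍ[ℝ]} (hab : ‖a‖ * ‖b‖ = 1) :
    ∃ u v : ℍ[ℝ], ‖u‖ = 1 ∧ ‖v‖ = 1 ∧ ∀ z, a * z * b = u * z * v := by
  have ha : ‖a‖ ≠ 0 := left_ne_zero_of_mul_eq_one hab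
  refine ⟨‖a‖⁻¹ • a, ‖a‖ • b, ?_, ?_, fun z => ?_⟩
  · rw [norm_smul, norm_inv, norm_norm, inv_mul_cancel₀ ha]
  · rw [norm_smul, norm_norm, hab]
  · rw [mul_smul_comm, smul_mul_assoc, smul_mul_assoc, smul_inv_smul₀ ha]

theorem exists_eqOn_mul_mul_of_bijOn_ball {f : ℍ[ℝ] → ℍ[ℝ]}
    (hbij : BijOn f (ball 0 1) (ball 0 1)) (hf : ContDiffOn ℝ 2 f (ball 0 1))
    (hpc : ∀ x ∈ ball (0 : ℍ[ℝ]) 1, Pseudoconformal f x) (hf0 : f 0 = 0) :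
    ∃ u v : ℍ[ℝ], ‖u‖ = 1 ∧ ‖v‖ = 1 ∧ EqOn f (fun z => u * z * v) (ball 0 1) := by
  have hdim : 1 < Module.finrank ℝ ℍ[ℝ] := by
    rw [Quaternion.finrank_eq_four]
    norm_num
  have hconf : ∀ x ∈ ball (0 : ℍ[ℝ]) 1, ConformalAt f x := fun x hx => (hpc x hx).conformalAt
  obtain ⟨A, a, b, -, -, hfA, hA⟩ := hpc 0 (mem_ball_self one_pos)
  have hlinear : EqOn f (fun z => a * z * b) (ball 0 1) := fun z hz => by
    rw [eq_fderiv_zero_of_bijOn_ball hdim hbij hf hconf hf0 hz, hfA.fderiv, hA]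
  have hnorm : ‖a‖ * ‖b‖ = 1 := by
    obtain ⟨x, hx⟩ := exists_norm_eq ℍ[ℝ] (c := 1 / 2) (by norm_num)
    have hx₁ : ‖x‖ < 1 := by norm_num [hx]
    have hfx := norm_eq_norm_of_bijOn_ball hdim hbij hf hconf hf0 hx₁
    rw [hlinear (mem_ball_zero_iff.2 hx₁), norm_mul, norm_mul, hx] at hfx
    linarith
  obtain ⟨u, v, hu, hv, huv⟩ := exists_norm_eq_one_mul_mul_eq hnorm
  exact ⟨u, v, hu, hv, hlinear.trans fun z _ => huv z⟩

theorem stmt_16_general (f : ℍ[ℝ] → ℍ[ℝ]) (hbij : BijOn f (ball 0 1) (ball 0 1))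
    (hf : ContDiffOn ℝ 2 f (ball 0 1)) (hpc : ∀ ξ ∈ ball (0 : ℍ[ℝ]) 1, Pseudoconformal f ξ) :
    ∃ a u v : ℍ[ℝ], ‖a‖ < 1 ∧ ‖u‖ = 1 ∧ ‖v‖ = 1 ∧
      ∀ z ∈ ball (0 : ℍ[ℝ]) 1, f z = (1 - (u * z * v) * star a)⁻¹ * (a - u * z * v) := by
  have hnorm {z : ℍ[ℝ]} (hz : z ∈ ball 0 1) : ‖f z‖ < 1 := mem_ball_zero_iff.1 (hbij.mapsTo hz)
  have ha : ‖f 0‖ < 1 := hnorm (mem_ball_self one_pos)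
  have hsmooth : ContDiffOn ℝ 2 (moebius (f 0) ∘ f) (ball 0 1) := fun z hz =>
    (contDiffAt_moebius ha (hnorm hz)).comp_contDiffWithinAt z (hf z hz)
  obtain ⟨u, v, hu, hv, huv⟩ := exists_eqOn_mul_mul_of_bijOn_ball
    ((bijOn_moebius ha).comp hbij) hsmooth
    (fun z hz => (pseudoconformal_moebius ha (hnorm hz)).comp (hpc z hz)) (moebius_self (f 0))
  refine ⟨f 0, u, v, ha, hu, hv, fun z hz => ?_⟩
  calc f z = moebius (f 0) (moebius (f 0) (f z)) := (moebius_moebius ha (hnorm hz)).symm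
    _ = moebius (f 0) (u * z * v) := congrArg (moebius (f 0)) (huv hz)

/-- Paper's Theorem 3.37 for one quaternion variable: every real-analytic
pseudoconformal bijection of the open unit ball of `ℍ` is a Möbius transformation
`S_a` composed with a rotation `z ↦ u z v`. -/
theorem stmt_16 (f : ℍ[ℝ] → ℍ[ℝ])
    (hbij : Set.BijOn f (Metric.ball (0 : ℍ[ℝ]) 1) (Metric.ball (0 : ℍ[ℝ]) 1))
    (han : AnalyticOnNhd ℝ f (Metric.ball (0 : ℍ[ℝ]) 1))
    (hpc : ∀ ξ ∈ Metric.ball (0 : ℍ[ℝ]) 1, Pseudoconformal f ξ) :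
    ∃ a u v : ℍ[ℝ], ‖a‖ < 1 ∧ ‖u‖ = 1 ∧ ‖v‖ = 1 ∧
      ∀ z ∈ Metric.ball (0 : ℍ[ℝ]) 1,
        f z = (1 - (u * z * v) * star a)⁻¹ * (a - u * z * v) :=
  stmt_16_general f hbij (fun z hz => (han z hz).contDiffAt.contDiffWithinAt) hpc
end
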